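/- Every harmonic function in D is an energy minimizer: if M ≥ 0 and h ∈ D_M satisfies Δh = 0 (i.e. lim_{m→∞} max_{p ∈ V_m ∖ V_M} |N^{m+1} H_m h(p)| = 0), then h is constant on every cylinder set of length M+1. -/

import Mathlib

open Filter Topology MeasureTheory Finset Classical

noncomputable section

/-- The one-sided full shift space `Σ_N^+` on `N` symbols; coordinates are indexed
from `0`, so the paper's `x_1 x_2 ⋯` is `x 0, x 1, ⋯` here. It carries the product
of the discrete topology on `Fin N`. -/
abbrev SSp (N : ℕ) : Type := ℕ → Fin N

/-- The level-`m` vertex set `V_m = {p : p_i = p_{i+1} for all i ≥ m+1}` (1-based),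
i.e. the sequences that are constant from (0-based) coordinate `m` on.  It is
realized as a `Finset` via the parametrization by the first `m+1` coordinates;
see `mem_V` for the defining property. -/
noncomputable def V (N m : ℕ) : Finset (SSp N) :=
  (Finset.univ : Finset (Fin (m + 1) → Fin N)).image
    (fun w j => w ⟨min j m, by omega⟩)

lemma const_from (N m : ℕ) (p : SSp N) (h : ∀ i, m ≤ i → p i = p (i + 1)) :
    ∀ j, m ≤ j → p j = p m := by
  intro j hj
  induction j with
  | zero => have : m = 0 := by omega
            simp [this]
  | succ k ih =>
      rcases Nat.lt_or_ge k m with hk | hk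
      · have : m = k + 1 := by omega
        simp [this]
      · rw [← h k hk]
        exact ih hk

/-- Membership in `V N m` is exactly the paper's condition
`p_i = p_{i+1}` for all `i ≥ m+1` (1-based), i.e. `p i = p (i+1)` for all `i ≥ m`. -/
lemma mem_V {N m : ℕ} {p : SSp N} :
    p ∈ V N m ↔ ∀ i, m ≤ i → p i = p (i + 1) := by
  classical
  constructor
  · intro hp i hi
    simp only [V, Finset.mem_image] at hp
    obtain ⟨w, -, rfl⟩ := hp
    have h1 : min i m = m := by omega
    have h2 : min (i + 1) m = m := by omega
    simp [h1, h2]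
  · intro h
    simp only [V, Finset.mem_image]
    refine ⟨fun j => p j, Finset.mem_univ _, ?_⟩
    funext j
    rcases Nat.lt_or_ge j m with hj | hj
    · have : min j m = j := by omega
      simp [this]
    · have : min j m = m := by omega
      simp only [this]
      exact (const_from N m p h j hj).symm

/-- The deleted neighbourhood `U_{p,m} = {q ∈ V_m : q ≠ p, q_i = p_i for 1 ≤ i ≤ m}`
(1-based), i.e. `q` agrees with `p` on the first `m` (0-based: `i < m`) coordinates. -/
noncomputable def U (N m : ℕ) (p : SSp N) : Finset (SSp N) :=
  (V N m).filter (fun q => q ≠ p ∧ ∀ i, i < m → q i = p i)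

/-- `κ_p = min {j : p ∈ V_j}`. -/
noncomputable def kappa (N : ℕ) (p : SSp N) : ℕ := sInf {j | p ∈ V N j}

/-- The difference operator
`H_m u (p) = Σ_{i = κ_p}^{m} Σ_{q ∈ U_{p,i}} (u(q) − u(p))`. -/
noncomputable def H (N m : ℕ) (u : SSp N → ℝ) (p : SSp N) : ℝ :=
  ∑ i ∈ Finset.Icc (kappa N p) m, ∑ q ∈ U N i p, (u q - u p)

/-- The Dirichlet form `E_{H_m}(u, v) = − Σ_{p ∈ V_m} u(p) · H_m v(p)`. -/
noncomputable def EH (N m : ℕ) (u v : SSp N → ℝ) : ℝ :=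
  -∑ p ∈ V N m, u p * H N m v p

/-- The cylinder set `[p_1 ⋯ p_m]`, determined by the first `m` coordinates of `p`. -/
def cyl (N m : ℕ) (p : SSp N) : Set (SSp N) := {x | ∀ i, i < m → x i = p i}

/-- `χ_p^m` : the indicator function of the cylinder set `[p_1 ⋯ p_{m+1}]`. -/
noncomputable def chi (N m : ℕ) (p : SSp N) : SSp N → ℝ :=
  (cyl N (m + 1) p).indicator 1

/-- `u ∈ dom E`: `u` is continuous and the energy
`E(u) = lim_m E_{H_m}(u|_{V_m})` exists (and is finite). -/
def MemDomE (N : ℕ) (u : SSp N → ℝ) : Prop :=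
  Continuous u ∧ ∃ L : ℝ, Tendsto (fun m => EH N m u u) atTop (nhds L)

/-- `v ∈ dom_M E`: `v` has finite energy and vanishes on the boundary `V_M`. -/
def MemDomME (N M : ℕ) (v : SSp N → ℝ) : Prop :=
  MemDomE N v ∧ ∀ p ∈ V N M, v p = 0

/-- `u ∈ 𝒟_M` with `Δ u = f` (strong formulation with boundary `V_M`):
`u` and `f` are continuous and
`lim_{m → ∞} max_{p ∈ V_m ∖ V_M} |N^{m+1} H_m u(p) − f(p)| = 0`. -/
def IsLaplacianOn (N M : ℕ) (u f : SSp N → ℝ) : Prop :=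
  Continuous u ∧ Continuous f ∧
    ∀ ε : ℝ, 0 < ε → ∃ m₀ : ℕ, ∀ m, m₀ ≤ m → ∀ p ∈ V N m, p ∉ V N M →
      |(N : ℝ) ^ (m + 1) * H N m u p - f p| < ε

/-- `u ∈ D_μ` with `Δ u = f` (original definition of the Laplacian):
`u` and `f` are continuous and
`lim_{m → ∞} max_{p ∈ V_m ∖ V_{m−1}} |N^{m+1} H_m u(p) − f(p)| = 0`
(the level is written `m+1` to avoid natural subtraction). -/
def IsLaplacianDmu (N : ℕ) (u f : SSp N → ℝ) : Prop :=
  Continuous u ∧ Continuous f ∧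
    ∀ ε : ℝ, 0 < ε → ∃ m₀ : ℕ, ∀ m, m₀ ≤ m → ∀ p ∈ V N (m + 1), p ∉ V N m →
      |(N : ℝ) ^ (m + 2) * H N (m + 1) u p - f p| < ε

/-- `μ` is the equidistributed Bernoulli measure:
`μ([p_1 ⋯ p_m]) = N^{−m}` for every cylinder set. -/
def IsBernoulli (N : ℕ) (μ : Measure (SSp N)) : Prop :=
  ∀ (m : ℕ) (p : SSp N), μ (cyl N m p) = (N : ENNReal)⁻¹ ^ m

/-- `ρ(x,y) = min {i : x_i ≠ y_i}` (1-based; `0`-based first disagreement plus one). -/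
noncomputable def rho (N : ℕ) (x y : SSp N) : ℕ := sInf {i | x i ≠ y i} + 1

/-- The matrix `(G_m)_{pq}`: `2/N` if `q = p`, `1/N` if `q ∈ U_{p,m}`, `0` otherwise. -/
noncomputable def Gmat (N m : ℕ) (p q : SSp N) : ℝ :=
  if q = p then 2 / N else if q ∈ U N m p then 1 / N else 0

/-- The Green's function
`g(x,y) = Σ_{m=1}^{ρ(x,y)−1} Σ_{r,s ∈ V_m ∖ V_{m−1}} (G_m)_{rs} χ_r^m(x) χ_s^m(y)`
for `ρ(x,y) > 1`, and `g(x,y) = 0` for `ρ(x,y) = 1` (the sum is then empty). -/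
noncomputable def greenFn (N : ℕ) (x y : SSp N) : ℝ :=
  ∑ m ∈ Finset.Icc 1 (rho N x y - 1),
    ∑ r ∈ (V N m).filter (fun r => r ∉ V N (m - 1)),
      ∑ s ∈ (V N m).filter (fun s => s ∉ V N (m - 1)),
        Gmat N m r s * chi N m r x * chi N m s y

/-- The Green's operator `G_μ f (x) = ∫_{Σ_N^+ ∖ {x}} g(x,y) f(y) dμ(y)`. -/
noncomputable def Gop (N : ℕ) (μ : Measure (SSp N)) (f : SSp N → ℝ) (x : SSp N) : ℝ :=
  ∫ y in ({x}ᶜ : Set (SSp N)), greenFn N x y * f y ∂μ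


/-- The sequence that agrees with `x` up to coordinate `m` and is constant from there on. -/
def trunc (N m : ℕ) (x : SSp N) : SSp N := fun j => x (min j m)

lemma trunc_mem_V (N m : ℕ) (x : SSp N) : trunc N m x ∈ V N m := by
  rw [mem_V]
  intro i hi
  simp [trunc, hi, Nat.le_succ_of_le hi]

lemma trunc_apply_of_le {N m i : ℕ} (x : SSp N) (hi : i ≤ m) : trunc N m x i = x i := by
  simp [trunc, hi]

lemma trunc_congr {N m : ℕ} {x y : SSp N} (hxy : ∀ i, i < m + 1 → x i = y i) :
    trunc N m x = trunc N m y := by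
  funext j
  exact hxy _ (by omega)

lemma trunc_eq_self {N m : ℕ} {p : SSp N} (hp : p ∈ V N m) : trunc N m p = p := by
  funext j
  rcases le_total j m with hj | hj
  · exact trunc_apply_of_le p hj
  · simp only [trunc, min_eq_right hj]
    exact (const_from N m p (mem_V.1 hp) j hj).symm

lemma continuous_trunc (N m : ℕ) : Continuous (trunc N m) :=
  continuous_pi fun _ => continuous_apply _

lemma tendsto_trunc (N : ℕ) (x : SSp N) :
    Tendsto (fun m => trunc N m x) atTop (𝓝 x) := by
  rw [tendsto_pi_nhds]
  intro i
  refine tendsto_const_nhds.congr' ?_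
  filter_upwards [eventually_ge_atTop i] with m hm
  exact (trunc_apply_of_le x hm).symm

lemma V_subset_V {N m n : ℕ} (hmn : m ≤ n) : V N m ⊆ V N n := fun _ hp =>
  mem_V.2 fun i hi => mem_V.1 hp i (hmn.trans hi)

lemma card_V_le (N m : ℕ) : (V N m).card ≤ N ^ (m + 1) :=
  card_image_le.trans (by simp)

lemma kappa_le_iff {N m i : ℕ} {p : SSp N} (hp : p ∈ V N m) :
    kappa N p ≤ i ↔ p ∈ V N i := by
  refine ⟨fun hi => V_subset_V hi ?_, fun hi => Nat.sInf_le hi⟩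
  exact Nat.sInf_mem (s := {j | p ∈ V N j}) ⟨m, hp⟩

lemma mem_U {N m : ℕ} {p q : SSp N} :
    q ∈ U N m p ↔ q ∈ V N m ∧ q ≠ p ∧ ∀ i, i < m → q i = p i := by
  simp [U]

lemma mem_U_comm {N m : ℕ} {p q : SSp N} :
    p ∈ V N m ∧ q ∈ U N m p ↔ p ∈ U N m q ∧ q ∈ V N m := by
  simp only [mem_U, eq_comm, ne_comm]
  tauto

/-- Summation by parts at a single level. -/
lemma sum_mul_sum_U_sub (N i : ℕ) (v : SSp N → ℝ) :
    ∑ p ∈ V N i, v p * ∑ q ∈ U N i p, (v q - v p) =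
      -(1 / 2) * ∑ p ∈ V N i, ∑ q ∈ U N i p, (v q - v p) ^ 2 := by
  have hswap : ∑ p ∈ V N i, ∑ q ∈ U N i p, v p * (v q - v p) =
      ∑ p ∈ V N i, ∑ q ∈ U N i p, v q * (v p - v q) :=
    sum_comm' fun _ _ => mem_U_comm
  have hsq : ∑ p ∈ V N i, ∑ q ∈ U N i p, (v q - v p) ^ 2 =
      -(∑ p ∈ V N i, ∑ q ∈ U N i p, v p * (v q - v p)) -
        ∑ p ∈ V N i, ∑ q ∈ U N i p, v q * (v p - v q) := by
    simp only [← sum_neg_distrib, ← sum_sub_distrib]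
    exact sum_congr rfl fun p _ => sum_congr rfl fun q _ => by ring
  simp only [mul_sum (U N i _)]
  rw [hsq, ← hswap]
  ring

/-- The Dirichlet form is half the sum of the squared differences over all levels. -/
lemma EH_self_eq (N m : ℕ) (v : SSp N → ℝ) :
    EH N m v v =
      ∑ i ∈ range (m + 1), 1 / 2 * ∑ p ∈ V N i, ∑ q ∈ U N i p, (v q - v p) ^ 2 := by
  have hlevels : ∑ p ∈ V N m, ∑ i ∈ Icc (kappa N p) m, v p * ∑ q ∈ U N i p, (v q - v p) =
      ∑ i ∈ range (m + 1), ∑ p ∈ V N i, v p * ∑ q ∈ U N i p, (v q - v p) := by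
    refine sum_comm' fun p i => ?_
    simp only [mem_Icc, mem_range, Nat.lt_succ_iff]
    constructor
    · rintro ⟨hp, hκ, him⟩
      exact ⟨(kappa_le_iff hp).1 hκ, him⟩
    · rintro ⟨hp, him⟩
      exact ⟨V_subset_V him hp, (kappa_le_iff hp).2 hp, him⟩
  simp only [EH, H, mul_sum (Icc _ _)]
  rw [hlevels, ← sum_neg_distrib]
  refine sum_congr rfl fun i _ => ?_
  rw [sum_mul_sum_U_sub]
  ring

lemma sq_sub_le_two_mul_EH {N m i : ℕ} (him : i ≤ m) (v : SSp N → ℝ) {p q : SSp N}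
    (hp : p ∈ V N i) (hq : q ∈ U N i p) : (v q - v p) ^ 2 ≤ 2 * EH N m v v := by
  have hedge : (v q - v p) ^ 2 ≤ ∑ q ∈ U N i p, (v q - v p) ^ 2 :=
    single_le_sum (f := fun q => (v q - v p) ^ 2) (fun _ _ => sq_nonneg _) hq
  have hvertex : ∑ q ∈ U N i p, (v q - v p) ^ 2 ≤
      ∑ p ∈ V N i, ∑ q ∈ U N i p, (v q - v p) ^ 2 :=
    single_le_sum (f := fun p => ∑ q ∈ U N i p, (v q - v p) ^ 2)
      (fun _ _ => sum_nonneg fun _ _ => sq_nonneg _) hp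
  have hlevel : 1 / 2 * ∑ p ∈ V N i, ∑ q ∈ U N i p, (v q - v p) ^ 2 ≤ EH N m v v := by
    rw [EH_self_eq]
    refine single_le_sum
      (f := fun i => 1 / 2 * ∑ p ∈ V N i, ∑ q ∈ U N i p, (v q - v p) ^ 2)
      (fun _ _ => ?_) (mem_range.2 (Nat.lt_succ_of_le him))
    exact mul_nonneg (by norm_num) (sum_nonneg fun _ _ => sum_nonneg fun _ _ => sq_nonneg _)
  linarith

/-- Subtracting a function that depends only on the first `M + 1` coordinates does not change
`H_m` off `V_M`. -/
lemma H_sub_trunc {N M m : ℕ} (u : SSp N → ℝ) {p : SSp N} (hp : p ∈ V N m)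
    (hpM : p ∉ V N M) : H N m (fun x => u x - u (trunc N M x)) p = H N m u p := by
  have hκ : M < kappa N p := not_le.1 fun hle => hpM ((kappa_le_iff hp).1 hle)
  refine sum_congr rfl fun i hi => sum_congr rfl fun q hq => ?_
  have hi' := (mem_Icc.1 hi).1
  have htrunc : trunc N M q = trunc N M p :=
    trunc_congr fun j hj => (mem_U.1 hq).2.2 j (by omega)
  simp only [htrunc]
  ring

/-- A bounded function vanishing on `V_M` whose renormalized `H_m` is small off `V_M` has
small energy. -/
lemma EH_self_le {N M m : ℕ} (hN : 0 < N) {v : SSp N → ℝ} {C ε : ℝ}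
    (hC : ∀ x, |v x| ≤ C) (hε : 0 ≤ ε) (hvM : ∀ p ∈ V N M, v p = 0)
    (hH : ∀ p ∈ V N m, p ∉ V N M → |(N : ℝ) ^ (m + 1) * H N m v p| ≤ ε) :
    EH N m v v ≤ C * ε := by
  have hpow : (0 : ℝ) < (N : ℝ) ^ (m + 1) := by positivity
  have hC0 : 0 ≤ C := (abs_nonneg _).trans (hC fun _ => ⟨0, hN⟩)
  have hterm : ∀ p ∈ V N m, -(v p * H N m v p) ≤ C * ε / (N : ℝ) ^ (m + 1) := by
    intro p hp
    by_cases hpM : p ∈ V N M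
    · rw [hvM p hpM, zero_mul, neg_zero]
      positivity
    · rw [le_div_iff₀ hpow]
      calc -(v p * H N m v p) * (N : ℝ) ^ (m + 1)
          ≤ |v p * ((N : ℝ) ^ (m + 1) * H N m v p)| := by
            refine le_trans (le_of_eq ?_) (neg_le_abs _)
            ring
        _ ≤ C * ε := by
            rw [abs_mul]
            exact mul_le_mul (hC p) (hH p hp hpM) (abs_nonneg _) hC0
  have hcard : ((V N m).card : ℝ) ≤ (N : ℝ) ^ (m + 1) := by exact_mod_cast card_V_le N m
  calc EH N m v v = ∑ p ∈ V N m, -(v p * H N m v p) := by rw [EH, sum_neg_distrib]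
    _ ≤ (V N m).card • (C * ε / (N : ℝ) ^ (m + 1)) := sum_le_card_nsmul _ _ _ hterm
    _ ≤ (N : ℝ) ^ (m + 1) * (C * ε / (N : ℝ) ^ (m + 1)) := by
        rw [nsmul_eq_mul]
        gcongr
    _ = C * ε := by field_simp

/-- A continuous function that vanishes on `V_M` and has no variation along the edges of any
level vanishes identically. -/
lemma eq_zero_of_edges {N M : ℕ} {v : SSp N → ℝ} (hv : Continuous v)
    (hvM : ∀ p ∈ V N M, v p = 0)
    (hedge : ∀ i, ∀ p ∈ V N i, ∀ q ∈ U N i p, v q = v p) (x : SSp N) : v x = 0 := by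
  have hV : ∀ m, M ≤ m → ∀ p ∈ V N m, v p = 0 := by
    intro m hm
    induction m, hm using Nat.le_induction with
    | base => exact hvM
    | succ m _ ih =>
      intro p hp
      rw [← ih _ (trunc_mem_V N m p)]
      by_cases heq : trunc N m p = p
      · rw [heq]
      · refine (hedge (m + 1) p hp _ (mem_U.2 ⟨?_, heq, fun i hi => ?_⟩)).symm
        · exact V_subset_V m.le_succ (trunc_mem_V N m p)
        · exact trunc_apply_of_le p (Nat.lt_succ_iff.1 hi)
  refine tendsto_nhds_unique ((hv.tendsto x).comp (tendsto_trunc N x)) ?_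
  refine tendsto_const_nhds.congr' ?_
  filter_upwards [eventually_ge_atTop M] with m hm
  exact (hV m hm _ (trunc_mem_V N m x)).symm

/-- every harmonic function in `𝒟` is an energy minimizer: if
`h ∈ 𝒟_M` satisfies `Δh = 0`, then `h` is constant on every cylinder set of
length `M+1`. -/
theorem statement9 (N : ℕ) (hN : 2 ≤ N) (M : ℕ) (h : SSp N → ℝ)
    (hh : IsLaplacianOn N M h (fun _ => 0)) :
    ∀ x y : SSp N, (∀ i, i < M + 1 → x i = y i) → h x = h y := by
  obtain ⟨hcont, -, hlim⟩ := hh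
  set v : SSp N → ℝ := fun x => h x - h (trunc N M x) with hv_def
  have hv : Continuous v := hcont.sub (hcont.comp (continuous_trunc N M))
  have hvM : ∀ p ∈ V N M, v p = 0 := fun p hp => by simp [hv_def, trunc_eq_self hp]
  obtain ⟨C, hC⟩ : ∃ C, ∀ x, |v x| ≤ C := by
    obtain ⟨C, hC⟩ := isCompact_univ.exists_bound_of_continuousOn hv.continuousOn
    exact ⟨C, fun x => hC x (Set.mem_univ x)⟩
  have hC0 : 0 ≤ C := (abs_nonneg _).trans (hC fun _ => ⟨0, by omega⟩)
  have hedge : ∀ i, ∀ p ∈ V N i, ∀ q ∈ U N i p, v q = v p := by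
    intro i p hp q hq
    have hsq : (v q - v p) ^ 2 ≤ 0 := by
      refine le_of_forall_pos_le_add fun δ hδ => ?_
      obtain ⟨m₀, hm₀⟩ := hlim (δ / (2 * (C + 1))) (by positivity)
      have henergy : EH N (max m₀ i) v v ≤ C * (δ / (2 * (C + 1))) := by
        refine EH_self_le (by omega) hC (by positivity) hvM fun r hr hrM => ?_
        rw [hv_def, H_sub_trunc h hr hrM]
        simpa using (hm₀ _ (le_max_left _ _) r hr hrM).le
      have hle : C * (δ / (2 * (C + 1))) ≤ δ / 2 := by
        rw [← mul_div_assoc, div_le_div_iff₀ (by positivity) two_pos]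
        nlinarith
      linarith [sq_sub_le_two_mul_EH (le_max_right m₀ i) v hp hq]
    exact sub_eq_zero.1 (pow_eq_zero_iff two_ne_zero |>.1 (le_antisymm hsq (sq_nonneg _)))
  have hconst : ∀ x, h x = h (trunc N M x) := fun x =>
    sub_eq_zero.1 (eq_zero_of_edges hv hvM hedge x)
  intro x y hxy
  rw [hconst x, hconst y, trunc_congr hxy]
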